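/- There exists a nonnegative function φ : ℝ → ℝ of class C^∞ with compact support contained in [0,2], such that φ(τ) = 1 for τ ∈ [0,1], φ(τ) > 0 for τ ∈ [0,2), φ(τ) = 0 for τ ≥ 2, and for every i ∈ ℕ the integral ∫₀² |φ^{(i)}(τ)|² / φ(τ) dτ is finite. -/

import Mathlib

theorem stmt4_aux (g φ : ℝ → ℝ) (hg : ContDiff ℝ (⊤ : ℕ∞) g)
    (hφ : ∀ τ < (2 : ℝ), φ τ = Real.exp (-(2 - τ)⁻¹) * g τ) (i : ℕ) :
    ∃ G : ℝ → ℝ, ContDiff ℝ (⊤ : ℕ∞) G ∧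
      ∀ τ < (2 : ℝ), iteratedDeriv i φ τ
        = ((2 - τ)⁻¹) ^ (2 * i) * (Real.exp (-(2 - τ)⁻¹) * G τ) := by
  induction i with
  | zero => exact ⟨g, hg, fun τ h => by simp [hφ τ h]⟩
  | succ i ih =>
    obtain ⟨G, hG, h⟩ := ih
    have hG' : ContDiff ℝ (⊤ : ℕ∞) (deriv G) := (contDiff_infty_iff_deriv.1 hG).2
    refine ⟨fun τ => -G τ + 2 * i * (2 - τ) * G τ + (2 - τ) ^ 2 * deriv G τ, by fun_prop, ?_⟩
    intro τ hτ
    have hs : (2 - τ) ≠ 0 := by linarith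
    have hev : iteratedDeriv i φ =ᶠ[nhds τ]
        fun τ => ((2 - τ)⁻¹) ^ (2 * i) * (Real.exp (-(2 - τ)⁻¹) * G τ) := by
      filter_upwards [Iio_mem_nhds hτ] with x hx using h x hx
    rw [iteratedDeriv_succ, hev.deriv_eq]
    have h1 : HasDerivAt (fun τ : ℝ => (2 - τ)⁻¹) (((2 - τ)⁻¹) ^ 2) τ := by
      have := ((hasDerivAt_id τ).const_sub 2).inv hs
      have e : ((2 - τ)⁻¹) ^ 2 = -(-1) / (2 - τ) ^ 2 := by
        rw [inv_pow, neg_neg, one_div]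
      rw [e]
      exact this
    have h2 := (hG.differentiable (by simp) τ).hasDerivAt
    have h3 := (h1.pow (2 * i)).mul (h1.neg.exp.mul h2)
    refine h3.deriv.trans ?_
    rcases i with _ | i
    · simp
      field_simp
    · have e1 : 2 * (i + 1) - 1 = 2 * i + 1 := by omega
      simp only [e1, Pi.pow_apply, Pi.neg_apply, Pi.mul_apply]
      push_cast
      generalize Real.exp (-(2 - τ)⁻¹) = E
      obtain ⟨s, rfl⟩ : ∃ s, τ = 2 - s := ⟨2 - τ, by ring⟩
      simp only [sub_sub_cancel] at *
      obtain ⟨r, rfl⟩ : ∃ r, s = r⁻¹ := ⟨s⁻¹, by simp⟩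
      have hr : r ≠ 0 := by simpa using hs
      simp only [inv_inv]
      field_simp
      ring

theorem stmt4_cont (n : ℕ) :
    Continuous (fun τ : ℝ => ((2 - τ)⁻¹) ^ n * expNegInvGlue (2 - τ)) := by
  have := (expNegInvGlue.continuous_polynomial_eval_inv_mul (Polynomial.X ^ n)).comp
    (continuous_const.sub continuous_id : Continuous fun τ : ℝ => 2 - τ)
  simpa [Function.comp_def] using this

/-- Existence of the Mitidieri–Pohozaev cutoff function `φ₀ ∈ C₀^∞[0,∞)`:
smooth, nonnegative, equal to `1` on `[0,1]`, positive on `[0,2)`, vanishing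
for `τ ≥ 2` (i.e. its support in `[0,∞)` is contained in `[0,2]`), and with
`∫₀² |φ^{(i)}|²/φ < ∞` for every `i`. -/
theorem stmt4 :
    ∃ φ : ℝ → ℝ, ContDiff ℝ (⊤ : ℕ∞) φ ∧ (∀ τ, 0 ≤ φ τ) ∧
      (∀ τ ∈ Set.Icc (0 : ℝ) 1, φ τ = 1) ∧
      (∀ τ ∈ Set.Ico (0 : ℝ) 2, 0 < φ τ) ∧
      (∀ τ ≥ (2 : ℝ), φ τ = 0) ∧
      ∀ i : ℕ, MeasureTheory.IntegrableOn
        (fun τ => |iteratedDeriv i φ τ| ^ 2 / φ τ) (Set.Ioo (0 : ℝ) 2) := by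
  have he : ContDiff ℝ (⊤ : ℕ∞) expNegInvGlue := expNegInvGlue.contDiff
  set d : ℝ → ℝ := fun τ => expNegInvGlue (2 - τ) + expNegInvGlue (1 - (2 - τ)) with hd
  have hdpos : ∀ τ, 0 < d τ := fun τ => Real.smoothTransition.pos_denom (2 - τ)
  have hdc : ContDiff ℝ (⊤ : ℕ∞) d := by fun_prop
  have hex : ∀ τ < (2 : ℝ), expNegInvGlue (2 - τ) = Real.exp (-(2 - τ)⁻¹) := by
    intro τ h
    simp [expNegInvGlue, not_le.2 h]
  have hform : ∀ τ, Real.smoothTransition (2 - τ) = expNegInvGlue (2 - τ) / d τ := fun τ => rfl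
  refine ⟨fun τ => Real.smoothTransition (2 - τ), ?_, fun τ => Real.smoothTransition.nonneg _,
    fun τ h => Real.smoothTransition.one_of_one_le (by linarith [h.2]),
    fun τ h => Real.smoothTransition.pos_of_pos (by linarith [h.2]),
    fun τ h => Real.smoothTransition.zero_of_nonpos (by linarith), fun i => ?_⟩
  · exact (Real.smoothTransition.contDiff).comp (contDiff_const.sub contDiff_id)
  obtain ⟨G, hG, h⟩ := stmt4_aux (fun τ => (d τ)⁻¹) (fun τ => Real.smoothTransition (2 - τ))
    (hdc.inv fun τ => (hdpos τ).ne') (fun τ hτ => by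
      simp only [hform, hex τ hτ, div_eq_mul_inv]) i
  have hc : Continuous (fun τ : ℝ =>
      (((2 - τ)⁻¹) ^ (4 * i) * expNegInvGlue (2 - τ)) * (G τ ^ 2 * d τ)) :=
    (stmt4_cont (4 * i)).mul ((hG.continuous.pow 2).mul hdc.continuous)
  have hint := (hc.integrableOn_Icc (μ := MeasureTheory.volume) (a := 0) (b := 2)).mono_set
    Set.Ioo_subset_Icc_self
  refine hint.congr_fun (fun τ hτ => ?_) measurableSet_Ioo
  have hE := Real.exp_pos (-(2 - τ)⁻¹)
  have hD := hdpos τ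
  simp only [sq_abs]
  rw [h τ hτ.2, hform, hex τ hτ.2]
  generalize Real.exp (-(2 - τ)⁻¹) = E at *
  generalize (2 - τ)⁻¹ = r at *
  field_simp
  ring
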